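/- Let V : [0,T] → ℝ be nonnegative with V ∈ I^α(L^∞([0,T],ℝ)), and suppose (D^α V)(t) ≤ 2λ V(t) + η for almost every t ∈ [0,T], where λ, η > 0. Then V(t) ≤ η T^α E_α(2λ T^α)/Γ(α+1) for all t ∈ [0,T], where E_α is the Mittag-Leffler function. -/

import Mathlib

open MeasureTheory Set Real RealInnerProductSpace

noncomputable section

abbrev Evec (n : ℕ) := EuclideanSpace ℝ (Fin n)

/-- Generalized binomial coefficient `binom a j`. -/
def binomR (a : ℝ) (j : ℕ) : ℝ :=
  (∏ i ∈ Finset.range j, (a - (i : ℝ))) / (Nat.factorial j : ℝ)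

/-- Left-sided Riemann–Liouville fractional integral of order `α` with base point `0`. -/
def RLint {E : Type*} [NormedAddCommGroup E] [NormedSpace ℝ E]
    (α : ℝ) (f : ℝ → E) (t : ℝ) : E :=
  (Real.Gamma α)⁻¹ • ∫ τ in (0:ℝ)..t, ((t - τ) ^ (α - 1) : ℝ) • f τ

/-- Left-sided Riemann–Liouville fractional derivative of order `α` with base point `0`. -/
def RLderiv {E : Type*} [NormedAddCommGroup E] [NormedSpace ℝ E]
    (α : ℝ) (x : ℝ → E) (t : ℝ) : E :=
  deriv (fun s => (Real.Gamma (1 - α))⁻¹ • ∫ τ in (0:ℝ)..s, ((s - τ) ^ (-α) : ℝ) • x τ) t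

/-- Caputo fractional derivative of order `α` with base point `0`. -/
def CapDeriv {E : Type*} [NormedAddCommGroup E] [NormedSpace ℝ E]
    (α : ℝ) (x : ℝ → E) (t : ℝ) : E :=
  RLderiv α (fun s => x s - x 0) t

/-- Grünwald–Letnikov fractional difference of order `α` with step `h`. -/
def GLdiff {E : Type*} [NormedAddCommGroup E] [NormedSpace ℝ E]
    (α h : ℝ) (x : ℝ → E) (t : ℝ) : E :=
  ∑ j ∈ Finset.range (⌊t / h⌋₊ + 1), ((-1 : ℝ) ^ j * binomR α j) • x (t - (j : ℝ) * h)

/-- The kernel `p_α`. -/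
def pker (α : ℝ) (τ : ℝ) : ℝ :=
  (Real.Gamma α)⁻¹ * ∑ j ∈ Finset.range ⌈τ⌉₊, (-1 : ℝ) ^ j * binomR α j * ((τ - (j : ℝ)) ^ (α - 1) : ℝ)

/-- Mittag-Leffler function `E_α`. -/
def mittagLeffler (α z : ℝ) : ℝ := ∑' k : ℕ, z ^ k / Real.Gamma (α * (k : ℝ) + 1)

/-- `x` is a solution of the Caputo Cauchy problem `(^C D^α x)(t) = f(t, x(t))`, `x 0 = x₀`. -/
def IsCaputoSol (α T : ℝ) {n : ℕ} (f : ℝ → Evec n → Evec n) (x₀ : Evec n)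
    (x : ℝ → Evec n) : Prop :=
  (∃ φ : ℝ → Evec n, Measurable φ ∧
    (∃ C : ℝ, ∀ᵐ t ∂volume.restrict (Icc (0:ℝ) T), ‖φ t‖ ≤ C) ∧
    ∀ t ∈ Icc (0:ℝ) T, x t = x₀ + RLint α φ t) ∧
  ∀ᵐ t ∂volume.restrict (Icc (0:ℝ) T), CapDeriv α x t = f t (x t)

/-- `y` is a solution of the approximating retarded functional-differential Cauchy problem. -/
def IsApproxSol (α T h : ℝ) {n : ℕ} (f : ℝ → Evec n → Evec n) (x₀ : Evec n)
    (y : ℝ → Evec n) : Prop :=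
  (∃ Ly : NNReal, LipschitzOnWith Ly y (Icc (0:ℝ) T)) ∧ y 0 = 0 ∧
  ∀ᵐ t ∂volume.restrict (Icc (0:ℝ) T),
    HasDerivAt y (f t (x₀ + ((h ^ (α - 1) : ℝ)) • GLdiff (1 - α) h y t)) t

/-- `x` is a motion of the conflict-controlled Caputo system for realizations `u`, `v`. -/
def IsCtrlSol (α T : ℝ) {n nu nv : ℕ}
    (g : ℝ → Evec n → Evec nu → Evec nv → Evec n) (x₀ : Evec n)
    (u : ℝ → Evec nu) (v : ℝ → Evec nv) (x : ℝ → Evec n) : Prop :=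
  (∃ φ : ℝ → Evec n, Measurable φ ∧
    (∃ C : ℝ, ∀ᵐ t ∂volume.restrict (Icc (0:ℝ) T), ‖φ t‖ ≤ C) ∧
    ∀ t ∈ Icc (0:ℝ) T, x t = x₀ + RLint α φ t) ∧
  ∀ᵐ t ∂volume.restrict (Icc (0:ℝ) T), CapDeriv α x t = g t (x t) (u t) (v t)

/-- `y` is a motion of the approximating conflict-controlled system for realizations `ũ`, `ṽ`. -/
def IsCtrlApproxSol (α T h : ℝ) {n nu nv : ℕ}
    (g : ℝ → Evec n → Evec nu → Evec nv → Evec n) (x₀ : Evec n)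
    (ut : ℝ → Evec nu) (vt : ℝ → Evec nv) (y : ℝ → Evec n) : Prop :=
  (∃ Ly : NNReal, LipschitzOnWith Ly y (Icc (0:ℝ) T)) ∧ y 0 = 0 ∧
  ∀ᵐ t ∂volume.restrict (Icc (0:ℝ) T),
    HasDerivAt y (g t (x₀ + ((h ^ (α - 1) : ℝ)) • GLdiff (1 - α) h y t) (ut t) (vt t)) t

/-!
Write `V = I^α φ` with `φ` bounded. Fubini's theorem on a triangle and Euler's Beta integral give
`I^{1-α} I^α φ = ∫ φ`, so that `D^α V = φ` almost everywhere by Lebesgue's differentiation theorem.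
Applying `I^α` to the differential inequality yields the Volterra inequality
`V ≤ η T^α / Γ(α + 1) + c I^α V` with `c = 2λ`. Iterating it from a constant bound `V ≤ M` produces
the partial sums of the Mittag-Leffler series at `c t^α`, with the remainder
`M (c t^α)^n / Γ(α n + 1)`, which tends to zero.
-/

section Beta

variable {α β : ℝ}

lemma integral_rpow_mul_sub_rpow (hα : 0 < α) (hβ : 0 < β) {a : ℝ} (ha : 0 < a) :
    ∫ x in (0 : ℝ)..a, x ^ (α - 1) * (a - x) ^ (β - 1)
      = a ^ (α + β - 1) * ProbabilityTheory.beta α β := by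
  apply Complex.ofReal_injective
  have hbeta : Complex.betaIntegral α β = ProbabilityTheory.beta α β := by
    rw [Complex.betaIntegral_eq_Gamma_mul_div _ _ (by simpa) (by simpa), ProbabilityTheory.beta]
    simp only [← Complex.ofReal_add, Complex.Gamma_ofReal, Complex.ofReal_mul, Complex.ofReal_div]
  calc ((∫ x in (0 : ℝ)..a, x ^ (α - 1) * (a - x) ^ (β - 1) : ℝ) : ℂ)
      = ∫ x in (0 : ℝ)..a, (x : ℂ) ^ ((α : ℂ) - 1) * ((a : ℂ) - x) ^ ((β : ℂ) - 1) := by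
        rw [← intervalIntegral.integral_ofReal]
        refine intervalIntegral.integral_congr fun x hx => ?_
        rw [uIcc_of_le ha.le] at hx
        simp [Complex.ofReal_cpow hx.1, Complex.ofReal_cpow (sub_nonneg.2 hx.2)]
    _ = ((a ^ (α + β - 1) * ProbabilityTheory.beta α β : ℝ) : ℂ) := by
        rw [Complex.betaIntegral_scaled _ _ ha, hbeta]
        simp [Complex.ofReal_cpow ha.le]

lemma integral_sub_rpow_mul_sub_rpow (hα : 0 < α) (hβ : 0 < β) {a b : ℝ} (hab : a < b) :
    ∫ x in a..b, (b - x) ^ (β - 1) * (x - a) ^ (α - 1)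
      = ProbabilityTheory.beta α β * (b - a) ^ (α + β - 1) := by
  have hshift := intervalIntegral.integral_comp_sub_right (a := a) (b := b)
    (fun x => x ^ (α - 1) * (b - a - x) ^ (β - 1)) a
  simp only [sub_sub_sub_cancel_right, sub_self] at hshift
  simp only [mul_comm ((b - _) ^ (β - 1)), hshift,
    integral_rpow_mul_sub_rpow hα hβ (sub_pos.2 hab), mul_comm]

-- The integral is nonzero, whereas the integral of a non-integrable function is `0`.
lemma intervalIntegrable_sub_rpow_mul_sub_rpow (hα : 0 < α) (hβ : 0 < β) {a b : ℝ} (hab : a < b) :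
    IntervalIntegrable (fun x => (b - x) ^ (β - 1) * (x - a) ^ (α - 1)) volume a b := by
  apply intervalIntegral.intervalIntegrable_of_integral_ne_zero
  rw [integral_sub_rpow_mul_sub_rpow hα hβ hab]
  exact (mul_pos (ProbabilityTheory.beta_pos hα hβ) (rpow_pos_of_pos (sub_pos.2 hab) _)).ne'

end Beta

section Triangle

variable {E : Type*} [NormedAddCommGroup E] [NormedSpace ℝ E] {a b : ℝ}

/-- Lebesgue measure on the triangle of pairs `(r, τ)` with `a < τ < r ≤ b`, written as a
restriction of a product measure so that Fubini's theorem applies to it. -/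
def triangleMeasure (a b : ℝ) : Measure (ℝ × ℝ) :=
  ((volume.restrict (Ioc a b)).prod (volume.restrict (Ioc a b))).restrict {p | p.2 < p.1}

lemma measurableSet_snd_lt_fst : MeasurableSet {p : ℝ × ℝ | p.2 < p.1} :=
  measurableSet_lt measurable_snd measurable_fst

lemma integral_indicator_snd_lt_fst_left (f : ℝ × ℝ → E) {r : ℝ} (hr : r ∈ Ioc a b) :
    ∫ τ in Ioc a b, {p : ℝ × ℝ | p.2 < p.1}.indicator f (r, τ) = ∫ τ in a..r, f (r, τ) := by
  have hsection : Ioc a b ∩ Iio r = Ioo a r := by grind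
  change ∫ τ in Ioc a b, (Iio r).indicator (fun τ => f (r, τ)) τ = _
  rw [setIntegral_indicator measurableSet_Iio, hsection, ← integral_Ioc_eq_integral_Ioo,
    intervalIntegral.integral_of_le hr.1.le]

lemma integral_indicator_snd_lt_fst_right (f : ℝ × ℝ → E) {τ : ℝ} (hτ : τ ∈ Ioc a b) :
    ∫ r in Ioc a b, {p : ℝ × ℝ | p.2 < p.1}.indicator f (r, τ) = ∫ r in τ..b, f (r, τ) := by
  have hsection : Ioc a b ∩ Ioi τ = Ioc τ b := by grind
  change ∫ r in Ioc a b, (Ioi τ).indicator (fun r => f (r, τ)) r = _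
  rw [setIntegral_indicator measurableSet_Ioi, hsection, intervalIntegral.integral_of_le hτ.2]

lemma intervalIntegrable_integral_triangleMeasure (hab : a ≤ b) {f : ℝ × ℝ → E}
    (hf : Integrable f (triangleMeasure a b)) :
    IntervalIntegrable (fun r => ∫ τ in a..r, f (r, τ)) volume a b := by
  rw [intervalIntegrable_iff_integrableOn_Ioc_of_le hab]
  refine ((integrable_indicator_iff measurableSet_snd_lt_fst).2 hf).integral_prod_left.congr ?_
  filter_upwards [ae_restrict_mem measurableSet_Ioc] with r hr
  exact integral_indicator_snd_lt_fst_left f hr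

lemma integral_integral_triangleMeasure_swap (hab : a ≤ b) {f : ℝ × ℝ → E}
    (hf : Integrable f (triangleMeasure a b)) :
    ∫ r in a..b, ∫ τ in a..r, f (r, τ) = ∫ τ in a..b, ∫ r in τ..b, f (r, τ) := by
  rw [intervalIntegral.integral_of_le hab, intervalIntegral.integral_of_le hab,
    ← setIntegral_congr_fun measurableSet_Ioc
      fun r hr => integral_indicator_snd_lt_fst_left f hr,
    ← setIntegral_congr_fun measurableSet_Ioc
      fun τ hτ => integral_indicator_snd_lt_fst_right f hτ]
  exact integral_integral_swap ((integrable_indicator_iff measurableSet_snd_lt_fst).2 hf)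

lemma integrable_triangleMeasure {F : Type*} [NormedAddCommGroup F] (hab : a ≤ b) {f : ℝ × ℝ → F}
    (hmeas : AEStronglyMeasurable f (triangleMeasure a b))
    (hsection : ∀ τ ∈ Ioo a b, IntervalIntegrable (fun r => f (r, τ)) volume τ b)
    (hnorm : IntervalIntegrable (fun τ => ∫ r in τ..b, ‖f (r, τ)‖) volume a b) :
    Integrable f (triangleMeasure a b) := by
  refine (integrable_indicator_iff measurableSet_snd_lt_fst).1 ?_
  rw [integrable_prod_iff' ((aestronglyMeasurable_indicator_iff measurableSet_snd_lt_fst).2 hmeas),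
    ← restrict_Ioo_eq_restrict_Ioc]
  constructor
  · filter_upwards [ae_restrict_mem measurableSet_Ioo] with τ hτ
    have hIoo : Ioi τ ∩ Ioo a b = Ioo τ b := by grind
    change Integrable ((Ioi τ).indicator fun r => f (r, τ)) _
    rw [integrable_indicator_iff measurableSet_Ioi, IntegrableOn,
      Measure.restrict_restrict measurableSet_Ioi, hIoo]
    exact (intervalIntegrable_iff_integrableOn_Ioo_of_le hτ.2.le).1 (hsection τ hτ)
  · refine ((intervalIntegrable_iff_integrableOn_Ioo_of_le hab).1 hnorm).congr ?_
    filter_upwards [ae_restrict_mem measurableSet_Ioo] with τ hτ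
    simp only [norm_indicator_eq_indicator_norm, restrict_Ioo_eq_restrict_Ioc]
    exact (integral_indicator_snd_lt_fst_right (fun p => ‖f p‖) (Ioo_subset_Ioc_self hτ)).symm

end Triangle

section RLint

variable {E : Type*} [NormedAddCommGroup E] [NormedSpace ℝ E] {α β t : ℝ} {f g : ℝ → E}

/-- The integrand of the fractional integral `RLint α f t` is integrable, so that `RLint α f t` is
not a junk value. -/
def RLIntegrable (α : ℝ) (f : ℝ → E) (t : ℝ) : Prop :=
  IntervalIntegrable (fun τ => (t - τ) ^ (α - 1) • f τ) volume 0 t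

lemma intervalIntegrable_sub_rpow (hα : 0 < α) (t : ℝ) :
    IntervalIntegrable (fun τ : ℝ => (t - τ) ^ (α - 1)) volume 0 t := by
  have hrpow : IntervalIntegrable (fun x : ℝ => x ^ (α - 1)) volume 0 t :=
    intervalIntegral.intervalIntegrable_rpow' (by linarith)
  simpa using (hrpow.comp_sub_left t).symm

lemma RLIntegrable.of_continuous (hα : 0 < α) (hf : Continuous f) (t : ℝ) :
    RLIntegrable α f t :=
  (intervalIntegrable_sub_rpow hα t).smul_continuousOn hf.continuousOn

lemma RLIntegrable.of_memLp_top (hα : 0 < α) (ht : 0 ≤ t)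
    (hf : MemLp f ⊤ (volume.restrict (Icc 0 t))) : RLIntegrable α f t := by
  have hker := intervalIntegrable_sub_rpow hα t
  rw [RLIntegrable, intervalIntegrable_iff_integrableOn_Icc_of_le ht] at *
  exact hker.smul_of_top_left hf

lemma RLIntegrable.add (hf : RLIntegrable α f t) (hg : RLIntegrable α g t) :
    RLIntegrable α (fun τ => f τ + g τ) t := by
  simpa only [RLIntegrable, smul_add] using IntervalIntegrable.add hf hg

lemma RLIntegrable.const_smul (c : ℝ) (hf : RLIntegrable α f t) :
    RLIntegrable α (fun τ => c • f τ) t := by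
  simp only [RLIntegrable, smul_comm _ c]
  exact IntervalIntegrable.smul hf c

lemma RLIntegrable.congr_of_nonneg (ht : 0 ≤ t) (hf : RLIntegrable α f t)
    (hfg : EqOn f g (Icc 0 t)) : RLIntegrable α g t := by
  refine IntervalIntegrable.congr (fun τ hτ => ?_) hf
  rw [uIoc_of_le ht] at hτ
  simp only [hfg (Ioc_subset_Icc_self hτ)]

lemma RLIntegrable.aestronglyMeasurable (ht : 0 ≤ t) (hf : RLIntegrable α f t) :
    AEStronglyMeasurable f (volume.restrict (Ioc 0 t)) := by
  rw [RLIntegrable, intervalIntegrable_iff_integrableOn_Ioo_of_le ht] at hf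
  rw [← restrict_Ioo_eq_restrict_Ioc]
  have hinv : Measurable fun τ : ℝ => ((t - τ) ^ (α - 1))⁻¹ := by fun_prop
  refine (hinv.aestronglyMeasurable.smul hf.aestronglyMeasurable).congr ?_
  filter_upwards [ae_restrict_mem measurableSet_Ioo] with τ hτ
  exact inv_smul_smul₀ (rpow_pos_of_pos (sub_pos.2 hτ.2) _).ne' (f τ)

lemma RLint_congr_of_nonneg (ht : 0 ≤ t) (hfg : EqOn f g (Icc 0 t)) :
    RLint α f t = RLint α g t := by
  unfold RLint
  congr 1
  refine intervalIntegral.integral_congr fun τ hτ => ?_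
  rw [uIcc_of_le ht] at hτ
  simp only [hfg hτ]

lemma RLint_add (hf : RLIntegrable α f t) (hg : RLIntegrable α g t) :
    RLint α (fun τ => f τ + g τ) t = RLint α f t + RLint α g t := by
  simp only [RLint, smul_add, intervalIntegral.integral_add hf hg]

lemma RLint_const_smul (c : ℝ) (f : ℝ → E) (t : ℝ) :
    RLint α (fun τ => c • f τ) t = c • RLint α f t := by
  simp only [RLint, smul_comm _ c, intervalIntegral.integral_smul]

lemma RLint_sum {ι : Type*} (s : Finset ι) {f : ι → ℝ → E} (hf : ∀ i ∈ s, RLIntegrable α (f i) t) :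
    RLint α (fun τ => ∑ i ∈ s, f i τ) t = ∑ i ∈ s, RLint α (f i) t := by
  simp only [RLint, Finset.smul_sum, intervalIntegral.integral_finsetSum hf]

lemma RLint_mono_ae {f g : ℝ → ℝ} (hα : 0 < α) (ht : 0 ≤ t) (hf : RLIntegrable α f t)
    (hg : RLIntegrable α g t) (hfg : ∀ᵐ τ ∂volume.restrict (Icc 0 t), f τ ≤ g τ) :
    RLint α f t ≤ RLint α g t := by
  refine smul_le_smul_of_nonneg_left ?_ (by positivity)
  refine intervalIntegral.integral_mono_ae_restrict ht hf hg ?_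
  filter_upwards [hfg, ae_restrict_mem measurableSet_Icc] with τ hle hτ
  exact smul_le_smul_of_nonneg_left hle (rpow_nonneg (sub_nonneg.2 hτ.2) _)

lemma RLint_rpow (hα : 0 < α) (hβ : 0 ≤ β) (ht : 0 ≤ t) :
    RLint α (fun τ => τ ^ β) t = Gamma (β + 1) / Gamma (α + β + 1) * t ^ (α + β) := by
  rcases ht.eq_or_lt with rfl | ht
  · simp [RLint, Real.zero_rpow (by positivity : α + β ≠ 0)]
  have hbeta := integral_sub_rpow_mul_sub_rpow (add_pos_of_nonneg_of_pos hβ one_pos) hα ht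
  have hΓ := (Gamma_pos_of_pos hα).ne'
  simp only [sub_zero, add_sub_cancel_right, ProbabilityTheory.beta] at hbeta
  simp only [RLint, smul_eq_mul, hbeta]
  rw [show β + 1 + α = α + β + 1 by ring, add_sub_cancel_right]
  field_simp

lemma RLint_const (hα : 0 < α) (ht : 0 ≤ t) (c : ℝ) :
    RLint α (fun _ => c) t = c * t ^ α / Gamma (α + 1) := by
  have hone := RLint_rpow hα le_rfl ht
  simp only [rpow_zero, zero_add, Gamma_one, add_zero] at hone
  simpa [hone, mul_comm, div_eq_mul_inv, mul_assoc, mul_left_comm] using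
    RLint_const_smul (α := α) c (fun _ => (1 : ℝ)) t

lemma bddAbove_RLint_image_of_memLp_top {φ : ℝ → ℝ} {T : ℝ} (hα : 0 < α)
    (hφ : MemLp φ ⊤ (volume.restrict (Icc 0 T))) : BddAbove (RLint α φ '' Icc 0 T) := by
  set C := lpNorm φ ⊤ (volume.restrict (Icc 0 T))
  refine ⟨C * T ^ α / Gamma (α + 1), forall_mem_image.2 fun t ht => ?_⟩
  have hsub : volume.restrict (Icc 0 t) ≤ volume.restrict (Icc 0 T) :=
    Measure.restrict_mono_set _ (Icc_subset_Icc_right ht.2)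
  calc RLint α φ t ≤ RLint α (fun _ => C) t := by
        refine RLint_mono_ae hα ht.1 (.of_memLp_top hα ht.1 (hφ.mono_measure hsub))
          (.of_continuous hα continuous_const t) (ae_mono hsub ?_)
        filter_upwards [ae_le_lpNorm_exponent_top hφ] with τ hτ
        exact (le_abs_self _).trans hτ
    _ = C * t ^ α / Gamma (α + 1) := RLint_const hα ht.1 C
    _ ≤ C * T ^ α / Gamma (α + 1) := by
        have hC : 0 ≤ C := lpNorm_nonneg
        gcongr
        exacts [ht.1, ht.2]

end RLint

section Semigroup

variable {E : Type*} [NormedAddCommGroup E] [NormedSpace ℝ E] {α β s : ℝ} {φ : ℝ → E}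

lemma integral_norm_sub_rpow_mul_sub_rpow_smul (hα : 0 < α) (hβ : 0 < β) {τ : ℝ} (hτ : τ < s)
    (x : E) :
    ∫ r in τ..s, ‖((s - r) ^ (β - 1) * (r - τ) ^ (α - 1)) • x‖
      = ProbabilityTheory.beta α β * ‖(s - τ) ^ (α + β - 1) • x‖ := by
  rw [norm_smul, norm_of_nonneg (rpow_nonneg (sub_nonneg.2 hτ.le) _), ← mul_assoc,
    ← integral_sub_rpow_mul_sub_rpow hα hβ hτ, ← intervalIntegral.integral_mul_const]
  refine intervalIntegral.integral_congr fun r hr => ?_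
  rw [uIcc_of_le hτ.le] at hr
  have hsr : 0 ≤ s - r := sub_nonneg.2 hr.2
  have hrτ : 0 ≤ r - τ := sub_nonneg.2 hr.1
  simp only [norm_smul, norm_of_nonneg (mul_nonneg (rpow_nonneg hsr _) (rpow_nonneg hrτ _))]

lemma RLIntegrable.integrable_triangleMeasure_smul (hα : 0 < α) (hβ : 0 < β) (hs : 0 ≤ s)
    (hφ : RLIntegrable (α + β) φ s) :
    Integrable (fun p : ℝ × ℝ => ((s - p.1) ^ (β - 1) * (p.1 - p.2) ^ (α - 1)) • φ p.2)
      (triangleMeasure 0 s) := by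
  refine integrable_triangleMeasure hs ?_ (fun τ hτ => ?_) ?_
  · have hker : Measurable fun p : ℝ × ℝ => (s - p.1) ^ (β - 1) * (p.1 - p.2) ^ (α - 1) := by
      fun_prop
    exact (hker.aestronglyMeasurable.smul (hφ.aestronglyMeasurable hs).comp_snd).restrict
  · exact (intervalIntegrable_sub_rpow_mul_sub_rpow hα hβ hτ.2).smul_continuousOn
      (continuousOn_const (c := φ τ))
  · have hbeta := (IntervalIntegrable.norm hφ).const_mul (ProbabilityTheory.beta α β)
    rw [intervalIntegrable_iff_integrableOn_Ioo_of_le hs] at hbeta ⊢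
    refine hbeta.congr_fun (fun τ hτ => ?_) measurableSet_Ioo
    exact (integral_norm_sub_rpow_mul_sub_rpow_smul hα hβ hτ.2 (φ τ)).symm

lemma sub_rpow_smul_RLint (α β s r : ℝ) (φ : ℝ → E) :
    (s - r) ^ (β - 1) • RLint α φ r = (Gamma α)⁻¹ •
      ∫ τ in (0 : ℝ)..r, ((s - r) ^ (β - 1) * (r - τ) ^ (α - 1)) • φ τ := by
  simp only [RLint, mul_smul, intervalIntegral.integral_smul, smul_comm (Gamma α)⁻¹]

lemma RLIntegrable.rlIntegrable_RLint (hα : 0 < α) (hβ : 0 < β) (hs : 0 ≤ s)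
    (hφ : RLIntegrable (α + β) φ s) : RLIntegrable β (RLint α φ) s := by
  simp only [RLIntegrable, sub_rpow_smul_RLint]
  exact (intervalIntegrable_integral_triangleMeasure hs
    (hφ.integrable_triangleMeasure_smul hα hβ hs)).smul (Gamma α)⁻¹

theorem RLint_RLint [CompleteSpace E] (hα : 0 < α) (hβ : 0 < β) (hs : 0 ≤ s)
    (hφ : RLIntegrable (α + β) φ s) : RLint β (RLint α φ) s = RLint (α + β) φ s := by
  have hinner : ∫ τ in (0 : ℝ)..s, ∫ r in τ..s, ((s - r) ^ (β - 1) * (r - τ) ^ (α - 1)) • φ τ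
      = ProbabilityTheory.beta α β • ∫ τ in (0 : ℝ)..s, (s - τ) ^ (α + β - 1) • φ τ := by
    rw [← intervalIntegral.integral_smul, intervalIntegral.integral_of_le hs,
      intervalIntegral.integral_of_le hs, integral_Ioc_eq_integral_Ioo,
      integral_Ioc_eq_integral_Ioo]
    refine setIntegral_congr_fun measurableSet_Ioo fun τ hτ => ?_
    rw [intervalIntegral.integral_smul_const, integral_sub_rpow_mul_sub_rpow hα hβ hτ.2, mul_smul]
  have hconst : (Gamma β)⁻¹ * (Gamma α)⁻¹ * ProbabilityTheory.beta α β = (Gamma (α + β))⁻¹ := by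
    have hΓα := (Gamma_pos_of_pos hα).ne'
    have hΓβ := (Gamma_pos_of_pos hβ).ne'
    rw [ProbabilityTheory.beta]
    field_simp
  calc RLint β (RLint α φ) s
      = (Gamma β)⁻¹ • (Gamma α)⁻¹ • ∫ r in (0 : ℝ)..s, ∫ τ in (0 : ℝ)..r,
          ((s - r) ^ (β - 1) * (r - τ) ^ (α - 1)) • φ τ := by
        rw [RLint]
        simp only [sub_rpow_smul_RLint, intervalIntegral.integral_smul]
    _ = (Gamma β)⁻¹ • (Gamma α)⁻¹ • ProbabilityTheory.beta α β •
          ∫ τ in (0 : ℝ)..s, (s - τ) ^ (α + β - 1) • φ τ := by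
        rw [integral_integral_triangleMeasure_swap hs
          (hφ.integrable_triangleMeasure_smul hα hβ hs), hinner]
    _ = RLint (α + β) φ s := by rw [smul_smul, smul_smul, hconst, RLint]

end Semigroup

section RLderiv

variable {E : Type*} [NormedAddCommGroup E] [NormedSpace ℝ E] {α t : ℝ} {f : ℝ → E}

lemma rlIntegrable_one_iff : RLIntegrable 1 f t ↔ IntervalIntegrable f volume 0 t := by
  simp [RLIntegrable]

lemma RLint_one (f : ℝ → E) (t : ℝ) : RLint 1 f t = ∫ τ in (0 : ℝ)..t, f τ := by
  simp [RLint]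

lemma RLderiv_eq_deriv_RLint (α : ℝ) (f : ℝ → E) (t : ℝ) :
    RLderiv α f t = deriv (RLint (1 - α) f) t := by
  unfold RLderiv RLint
  rw [sub_sub_cancel_left]

theorem RLderiv_ae_eq_of_eqOn_RLint [CompleteSpace E] {T : ℝ} {V φ : ℝ → E} (hα : α ∈ Ioo 0 1)
    (hφ : IntegrableOn φ (Icc 0 T)) (hV : EqOn V (RLint α φ) (Icc 0 T)) :
    ∀ᵐ t ∂volume.restrict (Icc 0 T), RLderiv α V t = φ t := by
  have hint : ∀ s ∈ Icc 0 T, IntervalIntegrable φ volume 0 s := fun s hs =>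
    (intervalIntegrable_iff_integrableOn_Icc_of_le hs.1).2
      (hφ.mono_set (Icc_subset_Icc_right hs.2))
  have hprimitive : ∀ s ∈ Icc 0 T, RLint (1 - α) V s = ∫ τ in (0 : ℝ)..s, φ τ := fun s hs => by
    rw [RLint_congr_of_nonneg hs.1 (hV.mono (Icc_subset_Icc_right hs.2)),
      RLint_RLint hα.1 (sub_pos.2 hα.2) hs.1, add_sub_cancel, RLint_one]
    rw [add_sub_cancel, rlIntegrable_one_iff]
    exact hint s hs
  rw [← restrict_Ioo_eq_restrict_Icc, ae_restrict_iff' measurableSet_Ioo]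
  rcases le_or_gt T 0 with hT | hT
  · simp [Ioo_eq_empty_of_le hT]
  filter_upwards [(hint T ⟨hT.le, le_rfl⟩).ae_hasDerivAt_integral] with t hderiv ht
  rw [uIcc_of_le hT.le] at hderiv
  rw [RLderiv_eq_deriv_RLint]
  have hderivt := hderiv (Ioo_subset_Icc_self ht) 0 ⟨le_rfl, hT.le⟩
  refine (hderivt.congr_of_eventuallyEq ?_).deriv
  filter_upwards [Icc_mem_nhds ht.1 ht.2] using hprimitive

end RLderiv

section MittagLeffler

variable {α t : ℝ}

-- Restrict the integral of `u ^ x * exp (-u)` to `u > R`, where `R ^ x ≤ u ^ x`.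
lemma rpow_mul_exp_neg_le_Gamma_add_one {R x : ℝ} (hR : 0 ≤ R) (hx : 0 ≤ x) :
    R ^ x * exp (-R) ≤ Gamma (x + 1) := by
  have hconv : IntegrableOn (fun u => exp (-u) * u ^ x) (Ioi 0) := by
    simpa using GammaIntegral_convergent (s := x + 1) (by linarith)
  calc R ^ x * exp (-R) = ∫ u in Ioi R, exp (-u) * R ^ x := by
        rw [integral_mul_const, integral_exp_neg_Ioi, mul_comm]
    _ ≤ ∫ u in Ioi R, exp (-u) * u ^ x := by
        refine setIntegral_mono_on ((integrableOn_exp_neg_Ioi R).mul_const _)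
          (hconv.mono_set (Ioi_subset_Ioi hR)) measurableSet_Ioi fun u hu => ?_
        have hRu : R ≤ u := le_of_lt hu
        gcongr
    _ ≤ ∫ u in Ioi 0, exp (-u) * u ^ x := by
        refine setIntegral_mono_set hconv ?_ (Ioi_subset_Ioi hR).eventuallyLE
        filter_upwards [ae_restrict_mem measurableSet_Ioi] with u hu
        exact mul_nonneg (exp_pos _).le (rpow_nonneg (le_of_lt hu) _)
    _ = Gamma (x + 1) := by rw [Gamma_eq_integral (by positivity), add_sub_cancel_right]

/-- The `k`-th term of the Mittag-Leffler series `mittagLeffler α z`. -/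
def mittagLefflerTerm (α z : ℝ) (k : ℕ) : ℝ := z ^ k / Gamma (α * k + 1)

lemma Gamma_mul_natCast_add_one_pos (hα : 0 < α) (k : ℕ) : 0 < Gamma (α * k + 1) :=
  Gamma_pos_of_pos (by positivity)

-- With `R ^ α = |z| + 1`, the bound `(R ^ α) ^ k * exp (-R) ≤ Γ (α * k + 1)` makes the series
-- dominated by a geometric one of ratio `|z| / (|z| + 1)`.
lemma summable_mittagLefflerTerm (hα : 0 < α) (z : ℝ) : Summable (mittagLefflerTerm α z) := by
  set R : ℝ := (|z| + 1) ^ α⁻¹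
  have hR : 0 ≤ R := by positivity
  have hRα : R ^ α = |z| + 1 := rpow_inv_rpow (by positivity) hα.ne'
  have hratio : |z| / (|z| + 1) < 1 := (div_lt_one (by positivity)).2 (lt_add_one _)
  refine .of_norm_bounded
    ((summable_geometric_of_lt_one (by positivity) hratio).mul_left (exp R)) fun k => ?_
  have hΓ := Gamma_mul_natCast_add_one_pos hα k
  have hlower : (|z| + 1) ^ k * exp (-R) ≤ Gamma (α * k + 1) := by
    have hbound := rpow_mul_exp_neg_le_Gamma_add_one hR (x := α * k) (by positivity)
    rwa [rpow_mul hR, hRα, rpow_natCast] at hbound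
  rw [mittagLefflerTerm, norm_div, norm_pow, norm_eq_abs, norm_of_nonneg hΓ.le, div_le_iff₀ hΓ]
  calc |z| ^ k = exp R * (|z| / (|z| + 1)) ^ k * ((|z| + 1) ^ k * exp (-R)) := by
        rw [exp_neg, div_pow]
        field_simp
    _ ≤ exp R * (|z| / (|z| + 1)) ^ k * Gamma (α * k + 1) := by gcongr

lemma hasSum_mittagLeffler (hα : 0 < α) (z : ℝ) :
    HasSum (mittagLefflerTerm α z) (mittagLeffler α z) :=
  (summable_mittagLefflerTerm hα z).hasSum

lemma monotoneOn_mittagLeffler (hα : 0 < α) : MonotoneOn (mittagLeffler α) (Ici 0) := by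
  intro x hx y _ hxy
  refine hasSum_le (fun k => ?_) (hasSum_mittagLeffler hα x) (hasSum_mittagLeffler hα y)
  have hΓ := Gamma_mul_natCast_add_one_pos hα k
  exact div_le_div_of_nonneg_right (pow_le_pow_left₀ hx hxy k) hΓ.le

lemma continuous_mittagLefflerTerm_mul_rpow (hα : 0 ≤ α) (c : ℝ) (k : ℕ) :
    Continuous fun τ => mittagLefflerTerm α (c * τ ^ α) k := by
  unfold mittagLefflerTerm
  fun_prop (disch := assumption)

lemma mul_RLint_mittagLefflerTerm (hα : 0 < α) (ht : 0 ≤ t) (c : ℝ) (k : ℕ) :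
    c * RLint α (fun τ => mittagLefflerTerm α (c * τ ^ α) k) t
      = mittagLefflerTerm α (c * t ^ α) (k + 1) := by
  have hterm : EqOn (fun τ => mittagLefflerTerm α (c * τ ^ α) k)
      (fun τ => (c ^ k / Gamma (α * k + 1)) • τ ^ (α * k)) (Icc 0 t) := fun τ hτ => by
    simp only [mittagLefflerTerm, mul_pow, rpow_mul hτ.1, rpow_natCast, smul_eq_mul]
    ring
  have hexp : α * ((k + 1 : ℕ) : ℝ) = α + α * k := by push_cast; ring
  have hΓ := (Gamma_mul_natCast_add_one_pos hα k).ne'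
  rw [RLint_congr_of_nonneg ht hterm, RLint_const_smul, RLint_rpow hα (by positivity) ht,
    mittagLefflerTerm, mul_pow, ← rpow_natCast (t ^ α), ← rpow_mul ht, hexp, smul_eq_mul, pow_succ]
  field_simp

/-- The `n`-th Picard iterate of `V ↦ a + c * RLint α V` on `[0, ∞)` started at the constant
function `M`, written in closed form as a partial Mittag-Leffler sum plus a remainder. -/
def picardIterate (α a c M : ℝ) (n : ℕ) (t : ℝ) : ℝ :=
  a * ∑ k ∈ Finset.range n, mittagLefflerTerm α (c * t ^ α) k
    + M * mittagLefflerTerm α (c * t ^ α) n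

lemma continuous_picardIterate (hα : 0 ≤ α) (a c M : ℝ) (n : ℕ) :
    Continuous (picardIterate α a c M n) := by
  have hterm := continuous_mittagLefflerTerm_mul_rpow hα c
  unfold picardIterate
  fun_prop

lemma add_mul_RLint_picardIterate (hα : 0 < α) (ht : 0 ≤ t) (a c M : ℝ) (n : ℕ) :
    a + c * RLint α (picardIterate α a c M n) t = picardIterate α a c M (n + 1) t := by
  have hterm := fun k => RLIntegrable.of_continuous hα
    (continuous_mittagLefflerTerm_mul_rpow hα.le c k) t
  have hsum := RLIntegrable.of_continuous hα (continuous_finsetSum (Finset.range n) fun k _ =>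
    continuous_mittagLefflerTerm_mul_rpow hα.le c k) t
  have hlinear : RLint α (picardIterate α a c M n) t
      = a * ∑ k ∈ Finset.range n, RLint α (fun τ => mittagLefflerTerm α (c * τ ^ α) k) t
        + M * RLint α (fun τ => mittagLefflerTerm α (c * τ ^ α) n) t := by
    have hadd := RLint_add (hsum.const_smul a) ((hterm n).const_smul M)
    rwa [RLint_const_smul, RLint_const_smul, RLint_sum _ fun k _ => hterm k] at hadd
  have hzero : mittagLefflerTerm α (c * t ^ α) 0 = 1 := by simp [mittagLefflerTerm]
  simp only [hlinear, picardIterate, Finset.sum_range_succ', hzero,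
    ← mul_RLint_mittagLefflerTerm hα ht, ← Finset.mul_sum]
  ring

lemma tendsto_picardIterate (hα : 0 < α) (a c M t : ℝ) :
    Filter.Tendsto (picardIterate α a c M · t) Filter.atTop
      (nhds (a * mittagLeffler α (c * t ^ α))) := by
  have hsum := hasSum_mittagLeffler hα (c * t ^ α)
  simpa [picardIterate] using (hsum.tendsto_sum_nat.const_mul a).add
    (hsum.summable.tendsto_atTop_zero.const_mul M)

theorem le_mul_mittagLeffler_of_le_add_mul_RLint {a c T : ℝ} {V : ℝ → ℝ} (hα : 0 < α)
    (hc : 0 ≤ c) (hbdd : BddAbove (V '' Icc 0 T))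
    (hint : ∀ t ∈ Icc 0 T, RLIntegrable α V t) (hV : ∀ t ∈ Icc 0 T, V t ≤ a + c * RLint α V t) :
    ∀ t ∈ Icc 0 T, V t ≤ a * mittagLeffler α (c * t ^ α) := by
  obtain ⟨M, hM⟩ := hbdd
  have hiterate : ∀ n, ∀ t ∈ Icc 0 T, V t ≤ picardIterate α a c M n t := by
    intro n
    induction n with
    | zero =>
      intro t ht
      simpa [picardIterate, mittagLefflerTerm] using hM (mem_image_of_mem V ht)
    | succ n ih =>
      intro t ht
      have hmono : RLint α V t ≤ RLint α (picardIterate α a c M n) t := by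
        refine RLint_mono_ae hα ht.1 (hint t ht)
          (.of_continuous hα (continuous_picardIterate hα.le a c M n) t) ?_
        filter_upwards [ae_restrict_mem measurableSet_Icc] with τ hτ
        exact ih τ ⟨hτ.1, hτ.2.trans ht.2⟩
      calc V t ≤ a + c * RLint α V t := hV t ht
        _ ≤ a + c * RLint α (picardIterate α a c M n) t := by gcongr
        _ = picardIterate α a c M (n + 1) t := add_mul_RLint_picardIterate hα ht.1 a c M n
  exact fun t ht => ge_of_tendsto' (tendsto_picardIterate hα a c M t) fun n => hiterate n t ht

end MittagLeffler

section Comparison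

variable {α T c η : ℝ} {V φ : ℝ → ℝ}

lemma rlIntegrable_of_eqOn_RLint (hα : 0 < α) (hφ : MemLp φ ⊤ (volume.restrict (Icc 0 T)))
    (hV : EqOn V (RLint α φ) (Icc 0 T)) : ∀ t ∈ Icc 0 T, RLIntegrable α V t := by
  intro t ht
  have hsub : Icc 0 t ⊆ Icc 0 T := Icc_subset_Icc_right ht.2
  have hφt : RLIntegrable (α + α) φ t :=
    .of_memLp_top (by positivity) ht.1 (hφ.mono_measure (Measure.restrict_mono_set _ hsub))
  exact (hφt.rlIntegrable_RLint hα hα ht.1).congr_of_nonneg ht.1 (hV.mono hsub).symm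

theorem le_add_mul_RLint_of_RLderiv_le (hα : α ∈ Ioo 0 1)
    (hφ : MemLp φ ⊤ (volume.restrict (Icc 0 T))) (hV : EqOn V (RLint α φ) (Icc 0 T))
    (hDV : ∀ᵐ t ∂volume.restrict (Icc 0 T), RLderiv α V t ≤ c * V t + η) :
    ∀ t ∈ Icc 0 T, V t ≤ η * t ^ α / Gamma (α + 1) + c * RLint α V t := by
  intro t ht
  have hsub : volume.restrict (Icc 0 t) ≤ volume.restrict (Icc 0 T) :=
    Measure.restrict_mono_set _ (Icc_subset_Icc_right ht.2)
  have hφV : ∀ᵐ τ ∂volume.restrict (Icc 0 T), φ τ ≤ c * V τ + η := by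
    filter_upwards [RLderiv_ae_eq_of_eqOn_RLint hα (hφ.integrable le_top) hV, hDV] with τ heq hle
    rwa [heq] at hle
  have hφt : RLIntegrable α φ t := .of_memLp_top hα.1 ht.1 (hφ.mono_measure hsub)
  have hcV := (rlIntegrable_of_eqOn_RLint hα.1 hφ hV t ht).const_smul c
  have hη : RLIntegrable α (fun _ => η) t := .of_continuous hα.1 continuous_const t
  calc V t = RLint α φ t := hV ht
    _ ≤ RLint α (fun τ => c • V τ + η) t :=
        RLint_mono_ae hα.1 ht.1 hφt (hcV.add hη) (ae_mono hsub hφV)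
    _ = η * t ^ α / Gamma (α + 1) + c * RLint α V t := by
        rw [RLint_add hcV hη, RLint_const_smul, RLint_const hα.1 ht.1, smul_eq_mul, add_comm]

theorem stmt14_general (hα : α ∈ Ioo 0 1) (hc : 0 ≤ c) (hη : 0 ≤ η)
    (hφ : MemLp φ ⊤ (volume.restrict (Icc 0 T))) (hV : EqOn V (RLint α φ) (Icc 0 T))
    (hDV : ∀ᵐ t ∂volume.restrict (Icc 0 T), RLderiv α V t ≤ c * V t + η) :
    ∀ t ∈ Icc 0 T, V t ≤ η * T ^ α * mittagLeffler α (c * T ^ α) / Gamma (α + 1) := by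
  intro t ht
  have hΓ := Gamma_pos_of_pos (add_pos hα.1 one_pos)
  have hbdd : BddAbove (V '' Icc 0 T) :=
    hV.image_eq ▸ bddAbove_RLint_image_of_memLp_top hα.1 hφ
  have hvolterra : ∀ s ∈ Icc 0 T, V s ≤ η * T ^ α / Gamma (α + 1) + c * RLint α V s := by
    intro s hs
    grw [le_add_mul_RLint_of_RLderiv_le hα hφ hV hDV s hs, rpow_le_rpow hs.1 hs.2 hα.1.le]
  have htT : c * t ^ α ≤ c * T ^ α :=
    mul_le_mul_of_nonneg_left (rpow_le_rpow ht.1 ht.2 hα.1.le) hc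
  have hcoeff : 0 ≤ η * T ^ α / Gamma (α + 1) := by
    have hT : 0 ≤ T := ht.1.trans ht.2
    positivity
  have hct : 0 ≤ c * t ^ α := mul_nonneg hc (rpow_nonneg ht.1 α)
  calc V t ≤ η * T ^ α / Gamma (α + 1) * mittagLeffler α (c * t ^ α) :=
        le_mul_mittagLeffler_of_le_add_mul_RLint hα.1 hc hbdd
          (rlIntegrable_of_eqOn_RLint hα.1 hφ hV) hvolterra t ht
    _ ≤ η * T ^ α / Gamma (α + 1) * mittagLeffler α (c * T ^ α) :=
        mul_le_mul_of_nonneg_left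
          (monotoneOn_mittagLeffler hα.1 hct (hct.trans htT) htT) hcoeff
    _ = η * T ^ α * mittagLeffler α (c * T ^ α) / Gamma (α + 1) := by ring

end Comparison

theorem stmt14 (α T : ℝ) (hα : α ∈ Ioo (0:ℝ) 1) (hT : 0 < T)
    (V : ℝ → ℝ) (lam η : ℝ) (hlam : 0 < lam) (hη : 0 < η)
    (hVpos : ∀ t ∈ Icc (0:ℝ) T, 0 ≤ V t)
    (hVrep : ∃ φ : ℝ → ℝ, Measurable φ ∧
      (∃ C : ℝ, ∀ᵐ t ∂volume.restrict (Icc (0:ℝ) T), |φ t| ≤ C) ∧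
      ∀ t ∈ Icc (0:ℝ) T, V t = RLint α φ t)
    (hDV : ∀ᵐ t ∂volume.restrict (Icc (0:ℝ) T),
      RLderiv α V t ≤ 2 * lam * V t + η) :
    ∀ t ∈ Icc (0:ℝ) T,
      V t ≤ η * T ^ α * mittagLeffler α (2 * lam * T ^ α) / Real.Gamma (α + 1) := by
  obtain ⟨φ, hφ, ⟨C, hC⟩, hV⟩ := hVrep
  exact stmt14_general hα (by positivity) hη.le
    (memLp_top_of_bound hφ.aestronglyMeasurable C hC) hV hDV
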